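/- Let λ ∈ ℂ with Re λ < 0 and |Re λ| ≠ |Im λ|; write λ₁ = −Re λ > 0 and λ₂ = Im λ. Let 0 < β₀ < 1 and let γ denote the Euler–Mascheroni constant. Define g₁ : (0,1) → ℂ by g₁(ρ) = −1/(λ² · t₀^{ρ+1} · Γ(−ρ)), where Γ is the (real) Gamma function evaluated at the negative non-integer −ρ. Then for every t₀ ≥ e^{1−γ}·e^{2/β₀} and every ρ ∈ [β₀, 1), g₁ is differentiable at ρ and sign(λ₁² − λ₂²) · Re(g₁′(ρ)) ≤ −|λ₁² − λ₂²| / (|λ|⁴ · t₀^{ρ+1}). -/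

import Mathlib

/-!
Up to the factor `λ⁻²`, `g₁` is the positive function `u(ρ) = -1 / (t^(ρ+1) Γ(-ρ))`, whose
logarithmic derivative is `ψ(-ρ) - log t`, `ψ` being the digamma function. The functional equation
gives `ψ(-ρ) = ψ(2-ρ) + 1/ρ - 1/(1-ρ)`, and `ψ(2-ρ) ≤ ψ(2) = 1-γ` by log-convexity of `Γ`.
As `log t ≥ 1-γ + 2/ρ`, the logarithmic derivative is at most `-1/ρ - 1/(1-ρ) = -1/(ρ(1-ρ))`.
Finally `u(ρ) = ρ(1-ρ) / (t^(ρ+1) Γ(2-ρ)) ≥ ρ(1-ρ) / t^(ρ+1)`, since `Γ ≤ 1` on `[1,2]`.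
-/

section

open Real Set

theorem logDeriv_Gamma_add_one {s : ℝ} (hs : ∀ m : ℕ, s ≠ -m) :
    logDeriv Gamma (s + 1) = logDeriv Gamma s + 1 / s := by
  have hs0 : s ≠ 0 := by simpa using hs 0
  have hfe : (fun x ↦ Gamma (x + 1)) =ᶠ[nhds s] fun x ↦ x * Gamma x := by
    filter_upwards [eventually_ne_nhds hs0] with x hx using Gamma_add_one hx
  calc logDeriv Gamma (s + 1) = logDeriv (fun x ↦ Gamma (x + 1)) s := by
        rw [logDeriv_apply, logDeriv_apply, deriv_comp_add_const]
    _ = logDeriv (fun x ↦ x * Gamma x) s := (logDeriv_congr_nhds hfe).eq_of_nhds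
    _ = 1 / s + logDeriv Gamma s := by
        rw [logDeriv_mul (f := fun x ↦ x) s hs0 (Gamma_ne_zero hs) differentiableAt_fun_id
          (differentiableAt_Gamma hs), logDeriv_id']
    _ = logDeriv Gamma s + 1 / s := add_comm _ _

theorem logDeriv_Gamma_nat_add_one (n : ℕ) :
    logDeriv Gamma (n + 1) = -eulerMascheroniConstant + harmonic n := by
  rw [logDeriv_apply, deriv_Gamma_nat, Gamma_nat_eq_factorial,
    mul_div_cancel_left₀ _ (Nat.cast_ne_zero.mpr n.factorial_ne_zero)]

theorem logDeriv_Gamma_two : logDeriv Gamma 2 = 1 - eulerMascheroniConstant := by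
  have h := logDeriv_Gamma_nat_add_one 1
  rw [Nat.cast_one, one_add_one_eq_two, harmonic_succ, harmonic_zero] at h
  rw [h]
  push_cast
  ring

theorem monotoneOn_logDeriv_Gamma : MonotoneOn (logDeriv Gamma) (Ioi 0) := by
  have hasDerivAt_log_Gamma (x : ℝ) (hx : 0 < x) :
      HasDerivAt (log ∘ Gamma) (logDeriv Gamma x) x :=
    have differentiableAt_Gamma := differentiableOn_Gamma_Ioi.differentiableAt (Ioi_mem_nhds hx)
    differentiableAt_Gamma.hasDerivAt.log (Gamma_pos_of_pos hx).ne'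
  refine (convexOn_log_Gamma.monotoneOn_deriv fun x hx ↦ ?_).congr fun x hx ↦ ?_
  · exact (hasDerivAt_log_Gamma x hx).differentiableAt
  · exact (hasDerivAt_log_Gamma x hx).deriv

theorem ne_natCast_of_mem_Ioo_zero_one {ρ : ℝ} (hρ : ρ ∈ Ioo 0 1) (m : ℕ) : ρ ≠ m := by
  rintro rfl
  exact (Nat.cast_pos.mp hρ.1).ne' (Nat.cast_lt_one.mp hρ.2)

theorem logDeriv_Gamma_neg_le {ρ : ℝ} (hρ : ρ ∈ Ioo 0 1) :
    logDeriv Gamma (-ρ) ≤ 1 - eulerMascheroniConstant + 1 / ρ - 1 / (1 - ρ) := by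
  obtain ⟨h0, h1⟩ := hρ
  have shift_neg : logDeriv Gamma (1 - ρ) = logDeriv Gamma (-ρ) - 1 / ρ := by
    rw [← neg_add_eq_sub, logDeriv_Gamma_add_one fun m ↦
      neg_injective.ne (ne_natCast_of_mem_Ioo_zero_one ⟨h0, h1⟩ m), one_div_neg_eq_neg_one_div,
      ← sub_eq_add_neg]
  have shift_one_sub : logDeriv Gamma (2 - ρ) = logDeriv Gamma (1 - ρ) + 1 / (1 - ρ) := by
    rw [← logDeriv_Gamma_add_one fun m ↦ by linarith [m.cast_nonneg (α := ℝ)]]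
    ring_nf
  have le_two : logDeriv Gamma (2 - ρ) ≤ logDeriv Gamma 2 :=
    monotoneOn_logDeriv_Gamma (mem_Ioi.mpr (by linarith)) (mem_Ioi.mpr two_pos) (by linarith)
  rw [logDeriv_Gamma_two] at le_two
  linarith

theorem Gamma_le_one {x : ℝ} (hx : x ∈ Icc 1 2) : Gamma x ≤ 1 := by
  simpa using convexOn_Gamma.le_max_of_mem_Icc (mem_Ioi.mpr one_pos) (mem_Ioi.mpr two_pos) hx

-- At the poles of `Γ` both sides vanish, since there `Gamma` takes the junk value `0`.
theorem inv_Gamma_eq_mul_inv_Gamma_add_one (s : ℝ) :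
    (Gamma s)⁻¹ = s * (Gamma (s + 1))⁻¹ := by
  rcases eq_or_ne s 0 with rfl | hs
  · simp
  · rw [Gamma_add_one hs]; field_simp

theorem inv_Gamma_neg (ρ : ℝ) : (Gamma (-ρ))⁻¹ = -(ρ * (1 - ρ)) * (Gamma (2 - ρ))⁻¹ := by
  rw [inv_Gamma_eq_mul_inv_Gamma_add_one, inv_Gamma_eq_mul_inv_Gamma_add_one (-ρ + 1),
    show -ρ + 1 + 1 = 2 - ρ by ring]
  ring

/-- The real function `u` with `g₁ = λ⁻² u`; it carries all of the dependence of `g₁` on `ρ`. -/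
noncomputable def leadingTerm (t ρ : ℝ) : ℝ := -1 / (t ^ (ρ + 1) * Gamma (-ρ))

theorem div_rpow_le_leadingTerm {t ρ : ℝ} (ht : 0 < t) (hρ : ρ ∈ Ioo 0 1) :
    ρ * (1 - ρ) / t ^ (ρ + 1) ≤ leadingTerm t ρ := by
  obtain ⟨h0, h1⟩ := hρ
  have coeff_nonneg : 0 ≤ ρ * (1 - ρ) / t ^ (ρ + 1) :=
    div_nonneg (mul_nonneg h0.le (by linarith)) (rpow_nonneg ht.le _)
  have one_le_inv : 1 ≤ (Gamma (2 - ρ))⁻¹ :=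
    (one_le_inv₀ (Gamma_pos_of_pos (by linarith))).mpr
      (Gamma_le_one ⟨by linarith, by linarith⟩)
  calc ρ * (1 - ρ) / t ^ (ρ + 1)
      ≤ ρ * (1 - ρ) / t ^ (ρ + 1) * (Gamma (2 - ρ))⁻¹ :=
        le_mul_of_one_le_right coeff_nonneg one_le_inv
    _ = leadingTerm t ρ := by
        rw [leadingTerm, div_eq_mul_inv (-1), mul_inv, inv_Gamma_neg]
        ring

theorem hasDerivAt_leadingTerm {t ρ : ℝ} (ht : 0 < t) (hρ : ∀ m : ℕ, ρ ≠ m) :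
    HasDerivAt (leadingTerm t) (leadingTerm t ρ * (logDeriv Gamma (-ρ) - log t)) ρ := by
  have hρ' (m : ℕ) : -ρ ≠ -m := neg_injective.ne (hρ m)
  have hasDerivAt_rpow : HasDerivAt (fun r ↦ t ^ (r + 1)) (log t * 1 * t ^ (ρ + 1)) ρ :=
    ((hasDerivAt_id ρ).add_const 1).const_rpow ht
  have hasDerivAt_Gamma_neg : HasDerivAt (fun r ↦ Gamma (-r)) (deriv Gamma (-ρ) * -1) ρ :=
    (differentiableAt_Gamma hρ').hasDerivAt.comp ρ (hasDerivAt_neg ρ)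
  have rpow_ne_zero : t ^ (ρ + 1) ≠ 0 := (rpow_pos_of_pos ht _).ne'
  have Gamma_neg_ne_zero : Gamma (-ρ) ≠ 0 := Gamma_ne_zero hρ'
  refine ((hasDerivAt_const ρ (-1)).fun_div (hasDerivAt_rpow.fun_mul hasDerivAt_Gamma_neg)
    (mul_ne_zero rpow_ne_zero Gamma_neg_ne_zero)).congr_deriv ?_
  rw [leadingTerm, logDeriv_apply]
  field_simp
  ring

theorem deriv_leadingTerm_le {t ρ : ℝ} (hρ : ρ ∈ Ioo 0 1)
    (ht : exp (1 - eulerMascheroniConstant) * exp (2 / ρ) ≤ t) :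
    deriv (leadingTerm t) ρ ≤ -1 / t ^ (ρ + 1) := by
  have t_pos : 0 < t := lt_of_lt_of_le (by positivity) ht
  have ρ_pos : 0 < ρ := hρ.1
  have one_sub_pos : 0 < 1 - ρ := sub_pos.mpr hρ.2
  have coeff_pos : 0 < ρ * (1 - ρ) := mul_pos ρ_pos one_sub_pos
  have le_log : 1 - eulerMascheroniConstant + 2 / ρ ≤ log t := by
    rwa [le_log_iff_exp_le t_pos, exp_add]
  have logDeriv_le : logDeriv Gamma (-ρ) - log t ≤ -(1 / (ρ * (1 - ρ))) := by
    have partial_fractions : 1 / (ρ * (1 - ρ)) = 2 / ρ - 1 / ρ + 1 / (1 - ρ) := by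
      field_simp
      ring
    linarith [logDeriv_Gamma_neg_le hρ]
  have lower := div_rpow_le_leadingTerm t_pos hρ
  have leadingTerm_nonneg : 0 ≤ leadingTerm t ρ :=
    (div_nonneg coeff_pos.le (rpow_nonneg t_pos.le _)).trans lower
  calc deriv (leadingTerm t) ρ
      = leadingTerm t ρ * (logDeriv Gamma (-ρ) - log t) :=
        (hasDerivAt_leadingTerm t_pos (ne_natCast_of_mem_Ioo_zero_one hρ)).deriv
    _ ≤ leadingTerm t ρ * -(1 / (ρ * (1 - ρ))) :=
        mul_le_mul_of_nonneg_left logDeriv_le leadingTerm_nonneg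
    _ ≤ ρ * (1 - ρ) / t ^ (ρ + 1) * -(1 / (ρ * (1 - ρ))) :=
        mul_le_mul_of_nonpos_right lower (neg_nonpos.mpr (one_div_pos.mpr coeff_pos).le)
    _ = -1 / t ^ (ρ + 1) := by field_simp

theorem neg_one_div_eq_inv_sq_mul_leadingTerm (l : ℂ) (t ρ : ℝ) :
    -1 / (l ^ 2 * ((t ^ (ρ + 1) : ℝ) : ℂ) * ((Gamma (-ρ) : ℝ) : ℂ)) =
      (l ^ 2)⁻¹ * (leadingTerm t ρ : ℂ) := by
  rw [leadingTerm]
  push_cast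
  simp only [div_eq_mul_inv, mul_inv]
  ring

theorem real_sign_mul_self (x : ℝ) : sign x * x = |x| := by
  rcases lt_trichotomy x 0 with h | rfl | h
  · rw [sign_of_neg h, abs_of_neg h, neg_one_mul]
  · simp
  · rw [sign_of_pos h, abs_of_pos h, one_mul]

theorem re_inv_sq (z : ℂ) : ((z ^ 2)⁻¹).re = ((-z.re) ^ 2 - z.im ^ 2) / ‖z‖ ^ 4 := by
  rw [Complex.inv_re, Complex.normSq_eq_norm_sq, norm_pow, ← pow_mul, sq z, Complex.mul_re]
  ring

theorem g1_derivative_estimate_general (l : ℂ) (hl : l ≠ 0) (t₀ ρ : ℝ) (hρ : ρ ∈ Ioo 0 1)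
    (ht₀ : exp (1 - eulerMascheroniConstant) * exp (2 / ρ) ≤ t₀) :
    DifferentiableAt ℝ
        (fun ρ : ℝ => -1 / (l ^ 2 * ((t₀ ^ (ρ + 1) : ℝ) : ℂ) * ((Gamma (-ρ) : ℝ) : ℂ))) ρ ∧
      sign ((-l.re) ^ 2 - l.im ^ 2) *
          (deriv (fun ρ : ℝ => -1 / (l ^ 2 * ((t₀ ^ (ρ + 1) : ℝ) : ℂ) *
            ((Gamma (-ρ) : ℝ) : ℂ))) ρ).re ≤
        -|(-l.re) ^ 2 - l.im ^ 2| / (‖l‖ ^ 4 * t₀ ^ (ρ + 1)) := by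
  have t₀_pos : 0 < t₀ := lt_of_lt_of_le (by positivity) ht₀
  have hasDerivAt_u : HasDerivAt (leadingTerm t₀) (deriv (leadingTerm t₀) ρ) ρ :=
    (hasDerivAt_leadingTerm t₀_pos
      (ne_natCast_of_mem_Ioo_zero_one hρ)).differentiableAt.hasDerivAt
  have hasDerivAt_g₁ := hasDerivAt_u.ofReal_comp.const_mul (l ^ 2)⁻¹
  simp only [neg_one_div_eq_inv_sq_mul_leadingTerm]
  rw [hasDerivAt_g₁.deriv, Complex.re_mul_ofReal, re_inv_sq]
  refine ⟨hasDerivAt_g₁.differentiableAt, ?_⟩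
  set A := (-l.re) ^ 2 - l.im ^ 2
  calc sign A * (A / ‖l‖ ^ 4 * deriv (leadingTerm t₀) ρ)
      = |A| / ‖l‖ ^ 4 * deriv (leadingTerm t₀) ρ := by rw [← real_sign_mul_self]; ring
    _ ≤ |A| / ‖l‖ ^ 4 * (-1 / t₀ ^ (ρ + 1)) := by gcongr; exact deriv_leadingTerm_le hρ ht₀
    _ = -|A| / (‖l‖ ^ 4 * t₀ ^ (ρ + 1)) := by field_simp

end

/-- **Estimate (f11).** For `λ ∈ ℂ` with `λ₁ = −Re λ > 0`, `λ₂ = Im λ`,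
`|λ₁| ≠ |λ₂|`, `0 < β₀ < 1` and `t₀ ≥ e^{1−γ} e^{2/β₀}` (with `γ` the
Euler–Mascheroni constant), the function `g₁(ρ) = −1/(λ² t₀^{ρ+1} Γ(−ρ))` is
differentiable on `[β₀, 1)` and satisfies
`sign(λ₁² − λ₂²) · Re g₁′(ρ) ≤ −|λ₁² − λ₂²| / (|λ|⁴ t₀^{ρ+1})`. -/
theorem g1_derivative_estimate (l : ℂ) (hl : l.re < 0) (hl' : |l.re| ≠ |l.im|)
    (β₀ : ℝ) (hβ₀ : 0 < β₀) (hβ₀1 : β₀ < 1)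
    (t₀ : ℝ)
    (ht₀ : Real.exp (1 - Real.eulerMascheroniConstant) * Real.exp (2 / β₀) ≤ t₀) :
    ∀ ρ ∈ Set.Ico β₀ 1,
      DifferentiableAt ℝ
        (fun ρ : ℝ => -1 / (l ^ 2 * ((t₀ ^ (ρ + 1) : ℝ) : ℂ) *
          ((Real.Gamma (-ρ) : ℝ) : ℂ))) ρ ∧
      Real.sign ((-l.re) ^ 2 - l.im ^ 2) *
          (deriv (fun ρ : ℝ => -1 / (l ^ 2 * ((t₀ ^ (ρ + 1) : ℝ) : ℂ) *
            ((Real.Gamma (-ρ) : ℝ) : ℂ))) ρ).re ≤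
        -|(-l.re) ^ 2 - l.im ^ 2| / (‖l‖ ^ 4 * t₀ ^ (ρ + 1)) := by
  exact fun ρ hρ => g1_derivative_estimate_general l (fun h => by simp [h] at hl) t₀ ρ
    ⟨hβ₀.trans_le hρ.1, hρ.2⟩ (le_trans (by gcongr; exact hρ.1) ht₀)
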